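/- arXiv:1506.00263 — 5 statements merged into one kernel-verified Lean document; each statement's English description precedes it below -/
import Mathlib

section
/- Let M be an epi-retractable R-module. If M satisfies the (**) property, that is, every nonzero R-linear endomorphism of M is surjective, then M is coretractable. -/
/-- An `R`-module `M` is coretractable if for every proper submodule `K` of `M`
there exists a nonzero `R`-linear map from `M ⧸ K` to `M`. -/
def Coretractable (R : Type*) (M : Type*) [Ring R] [AddCommGroup M] [Module R M] : Prop :=
  ∀ K : Submodule R M, K ≠ ⊤ → ∃ f : (M ⧸ K) →ₗ[R] M, f ≠ 0

/-- An `R`-module `M` is epi-retractable if every submodule of `M` is a homomorphic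
image of `M`. -/
def EpiRetractable (R : Type*) (M : Type*) [Ring R] [AddCommGroup M] [Module R M] : Prop :=
  ∀ N : Submodule R M, ∃ f : M →ₗ[R] N, Function.Surjective f

theorem epiRetractable_starstar_imp_coretractable {R : Type*} [Ring R] {M : Type*}
    [AddCommGroup M] [Module R M] (h : EpiRetractable R M)
    (hss : ∀ f : M →ₗ[R] M, f ≠ 0 → Function.Surjective f) :
    Coretractable R M := by
  intro K hK
  -- `M` has no nontrivial proper submodule: a surjection `M → K` followed by the inclusion
  -- is an endomorphism with range `K`, so it is zero or surjective.
  have hbot : K = ⊥ := by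
    obtain ⟨g, hg⟩ := h K
    have hrange : LinearMap.range (K.subtype ∘ₗ g) = K := by
      rw [LinearMap.range_comp_of_range_eq_top _ (LinearMap.range_eq_top.2 hg),
        Submodule.range_subtype]
    by_cases h0 : K.subtype ∘ₗ g = 0
    · rw [← hrange, h0, LinearMap.range_zero]
    · exact absurd (hrange.symm.trans (LinearMap.range_eq_top.2 (hss _ h0))) hK
  refine ⟨(K.quotEquivOfEqBot hbot).toLinearMap, fun hf => hK ?_⟩
  refine (Submodule.eq_top_iff').2 fun x => ?_
  have hx : x = 0 := by
    simpa using LinearMap.congr_fun hf (Submodule.Quotient.mk x)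
  exact hx ▸ K.zero_mem
end

section
/- Let R be a commutative Artinian ring. Then R is a Kasch ring: every simple R-module admits an injective R-linear map into R. -/
/-!
A simple module is `R ⧸ I` with `I` maximal. Every prime of an Artinian ring is maximal, so `I` is
a minimal prime over `Ann R = 0`. As `R` is Noetherian, minimal primes over the annihilator are
associated primes of `R`, and this yields an embedding of `R ⧸ I` into `R`.
-/

theorem commArtinian_isKasch {R : Type u} [CommRing R] [IsArtinianRing R] :
    ∀ (M : Type u) [AddCommGroup M] [Module R M], IsSimpleModule R M →
      ∃ f : M →ₗ[R] R, Function.Injective f := by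
  intro M _ _ hM
  obtain ⟨I, hI, ⟨e⟩⟩ := isSimpleModule_iff_quot_maximal.mp hM
  have hmin : I ∈ (Module.annihilator R R).minimalPrimes := by
    refine ⟨⟨hI.isPrime, ?_⟩, fun J hJ hJI => ?_⟩
    · rw [Module.annihilator_eq_bot.mpr inferInstance]
      exact bot_le
    · have := hJ.1
      have hJmax : J.IsMaximal := inferInstance
      exact (hJmax.eq_of_le hI.ne_top hJI).ge
  have hass := Module.associatedPrimes.minimalPrimes_annihilator_subset_associatedPrimes R R hmin
  obtain ⟨_, g, hg⟩ := (isAssociatedPrime_iff_exists_injective_linearMap I R).mp hass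
  exact ⟨g ∘ₗ e.toLinearMap, hg.comp e.injective⟩
end

section
/- Let R be a commutative Artinian ring. Then R, regarded as a module over itself, is coretractable: for every proper ideal I of R there exists a nonzero R-linear map from R/I to R. -/
theorem commArtinian_coretractable {R : Type*} [CommRing R] [IsArtinianRing R] :
    Coretractable R R := by
  intro K hK
  obtain ⟨m, hm, hKm⟩ := Ideal.exists_le_maximal K hK
  have hmin : m ∈ (Module.annihilator R R).minimalPrimes := by
    have := hm.isPrime
    refine IsArtinianRing.mem_minimalPrimes (le_trans (fun r hr => ?_) bot_le)
    simpa using Module.mem_annihilator.mp hr 1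
  have hass := Module.associatedPrimes.minimalPrimes_annihilator_subset_associatedPrimes R R hmin
  obtain ⟨-, g, hg⟩ :=
    (isAssociatedPrime_iff_exists_injective_linearMap m R).mp hass
  refine ⟨g ∘ₗ Submodule.factor hKm, fun h => hm.ne_top ((Ideal.eq_top_iff_one m).mpr ?_)⟩
  -- If the composite vanished, then so would the class of `1` in `R ⧸ m`.
  have h1 : g (Submodule.Quotient.mk 1) = 0 := LinearMap.congr_fun h (Submodule.Quotient.mk 1)
  exact (Submodule.Quotient.mk_eq_zero m).mp ((map_eq_zero_iff g hg).mp h1)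
end

section
/- Let M be a nonsingular uniform R-module that possesses a nonzero proper submodule. Then M is not mono-coretractable; in fact, for every nonzero submodule N of M, every R-linear map from M/N to M is zero. -/
/-!
For `m : M` and a nonzero submodule `N`, the ideal `(N : m) = {r | r • m ∈ N}` is essential: given a
nonzero ideal `J`, either `J m = 0`, so `J ⊆ (N : m)`, or uniformity makes `J m` meet `N`
nontrivially, which yields a nonzero `r ∈ J` with `r • m ∈ N`. For `f : M ⧸ N → M` this ideal
annihilates `f (m + N)`, so nonsingularity forces `f = 0`. When `N` is also proper, `M ⧸ N ≠ 0`, and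
hence no map `M ⧸ N → M` is injective.
-/

/-- An `R`-module `M` is mono-coretractable if for every submodule `N` of `M`
there exists an injective `R`-linear map from `M ⧸ N` to `M`. -/
def MonoCoretractable (R : Type*) (M : Type*) [Ring R] [AddCommGroup M] [Module R M] : Prop :=
  ∀ N : Submodule R M, ∃ f : (M ⧸ N) →ₗ[R] M, Function.Injective f

theorem nonsingular_uniform_not_monoCoretractable {R : Type*} [Ring R] {M : Type*}
    [AddCommGroup M] [Module R M]
    -- M is nonsingular: every element whose annihilator is an essential ideal is zero
    (hns : ∀ m : M, (∀ J : Ideal R, J ≠ ⊥ → Ideal.torsionOf R M m ⊓ J ≠ ⊥) → m = 0)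
    -- M is uniform: any two nonzero submodules intersect nontrivially
    (hunif : ∀ P Q : Submodule R M, P ≠ ⊥ → Q ≠ ⊥ → P ⊓ Q ≠ ⊥)
    -- M has a nonzero proper submodule
    (hprop : ∃ L : Submodule R M, L ≠ ⊥ ∧ L ≠ ⊤) :
    ¬ MonoCoretractable R M ∧
      ∀ N : Submodule R M, N ≠ ⊥ → ∀ f : (M ⧸ N) →ₗ[R] M, f = 0 := by
  have key : ∀ N : Submodule R M, N ≠ ⊥ → ∀ f : (M ⧸ N) →ₗ[R] M, f = 0 := by
    intro N hN f
    ext m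
    refine hns (f (N.mkQ m)) fun J hJ => ?_
    -- the submodule `J m`
    let P : Submodule R M := Submodule.map (LinearMap.toSpanSingleton R M m) J
    by_cases hP : P = ⊥
    · obtain ⟨r, hrJ, hr0⟩ := Submodule.exists_mem_ne_zero_of_ne_bot hJ
      have hrm : r • m = 0 := by
        have : r • m ∈ P := ⟨r, hrJ, by simp⟩
        rwa [hP, Submodule.mem_bot] at this
      refine (Submodule.ne_bot_iff _).2 ⟨r, ⟨?_, hrJ⟩, hr0⟩
      change r • f (N.mkQ m) = 0
      rw [← map_smul, ← map_smul, hrm, map_zero, map_zero]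
    · obtain ⟨x, ⟨⟨r, hrJ, hrx⟩, hxN⟩, hx0⟩ :=
        Submodule.exists_mem_ne_zero_of_ne_bot (hunif P N hP hN)
      rw [LinearMap.toSpanSingleton_apply] at hrx
      refine (Submodule.ne_bot_iff _).2 ⟨r, ⟨?_, hrJ⟩, ?_⟩
      · change r • f (N.mkQ m) = 0
        have hmk : N.mkQ x = 0 := (Submodule.Quotient.mk_eq_zero N).2 hxN
        rw [← map_smul, ← map_smul, hrx, hmk, map_zero]
      · rintro rfl
        exact hx0 (by rw [← hrx, zero_smul])
  refine ⟨fun h => ?_, key⟩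
  obtain ⟨L, hL0, hL1⟩ := hprop
  obtain ⟨f, hf⟩ := h L
  refine hL1 (Submodule.eq_top_iff'.2 fun m => ?_)
  refine (Submodule.Quotient.mk_eq_zero L).1 (hf ?_)
  rw [key L hL0 f, LinearMap.zero_apply, LinearMap.zero_apply]
end

section
/- If R, regarded as a module over itself, is mono-coretractable, then R has no proper dense ideals: every ideal I of R that is dense in R (as a submodule of the R-module R) equals R. -/
/-- A submodule `N` of an `R`-module `M` is dense in `M` if for every `y ∈ M` and every
nonzero `x ∈ M` there exists `r ∈ R` such that `r • x ≠ 0` and `r • y ∈ N`. -/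
def IsDenseSubmodule {R : Type*} {M : Type*} [Ring R] [AddCommGroup M] [Module R M]
    (N : Submodule R M) : Prop :=
  ∀ y x : M, x ≠ 0 → ∃ r : R, r • x ≠ 0 ∧ r • y ∈ N

theorem monoCoretractable_no_proper_dense_ideal {R : Type*} [Ring R]
    (h : MonoCoretractable R R) :
    ∀ I : Ideal R, IsDenseSubmodule I → I = ⊤ := by
  intro I hI
  obtain ⟨f, hf⟩ := h I
  rw [Ideal.eq_top_iff_one, ← Submodule.Quotient.mk_eq_zero I]
  apply hf
  rw [map_zero]
  by_contra hx
  -- Density at `y = 1` yields `r ∈ I` that does not annihilate the image of the class of `1`.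
  obtain ⟨r, hr, hrI⟩ := hI 1 _ hx
  apply hr
  rw [← map_smul, ← Submodule.Quotient.mk_smul, (Submodule.Quotient.mk_eq_zero I).2 hrI, map_zero]
end
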